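/- Let G be a finite solvable group, H a finite group, and N a normal subgroup of H. Then Λ_{G, H/N} ≤ Λ_{G, H}. -/

import Mathlib

/-!
Distinct affine homomorphisms with nonempty agreement agree exactly on a coset of the equalizer
`E` of their linear parts, so their agreement is `1 / [G : E]` with `E` proper.

Let `φ, ψ : G → K` be homomorphisms with proper equalizer `E` of index `n`, where `G` is solvable,
and let `C` be the normal core of `E`. The nontrivial solvable group `G ⧸ C` has a normal subgroup
of some prime index `r`. As `G ⧸ C` embeds in the symmetric group on the `n` cosets of `E`,
`r ∣ n!` and hence `r ≤ n`. As `ker φ ⊓ ker ψ ≤ C`, the order of `G ⧸ C` divides `|K|²`, and hence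
`r ∣ |K|`. This is `exists_prime_index_of_eqLocus`.

For `K = H ⧸ N` the prime `r` divides `|H|`, so `H` has a cyclic subgroup of order `r`, and the map
`G → C_r → H` agrees with the trivial homomorphism on exactly `1 / r ≥ 1 / n` of `G`.
-/

open scoped BigOperators

/-- The fractional agreement between two functions. -/
noncomputable def agr {G H : Type*} (f g : G → H) : ℝ :=
  (Nat.card {x : G // f x = g x} : ℝ) / (Nat.card G : ℝ)

/-- A (left) affine homomorphism between groups. -/
def IsAffineHom {G H : Type*} [Group G] [Group H] (φ : G → H) : Prop :=
  ∃ (h : H) (φ₀ : G →* H), ∀ g, φ g = h * φ₀ g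

/-- `Λ_{G,H}`: the maximum agreement between distinct affine homomorphisms,
with the convention that it is `0` if there are at most one of them. -/
noncomputable def Lambda (G H : Type*) [Group G] [Group H] : ℝ :=
  sSup (insert (0 : ℝ)
    {a : ℝ | ∃ φ ψ : G → H, IsAffineHom φ ∧ IsAffineHom ψ ∧ φ ≠ ψ ∧ a = agr φ ψ})

/-- A group is supersolvable if it has a chain of subgroups, each normal in the
whole group, whose consecutive quotients are cyclic (equivalently each step is
obtained from the previous one by adjoining a single generator). -/
def IsSupersolvable (G : Type*) [Group G] : Prop :=
  ∃ (k : ℕ) (s : ℕ → Subgroup G),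
    s 0 = ⊥ ∧ s k = ⊤ ∧ (∀ i, (s i).Normal) ∧
    (∀ i < k, s i ≤ s (i + 1)) ∧
    (∀ i < k, ∃ g : G, s (i + 1) = s i ⊔ Subgroup.zpowers g)

/-- Any maximal subgroup containing the commutator subgroup has prime index. -/
lemma exists_normal_prime_index (Q : Type*) [Group Q] [Finite Q] [Nontrivial Q] [Group.IsSolvable Q] :
    ∃ M : Subgroup Q, M.Normal ∧ M.index.Prime := by
  have hlt := Group.IsSolvable.commutator_lt_top_of_nontrivial Q
  obtain ⟨M, hM, hcM⟩ := (eq_top_or_exists_le_coatom (commutator Q)).resolve_left hlt.ne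
  have hn : M.Normal := Subgroup.Normal.of_commutator_le Q hcM
  refine ⟨M, hn, ?_⟩
  have hne : Nat.card (Q ⧸ M) ≠ 1 := by
    intro h
    exact hM.1 (Subgroup.index_eq_one.mp h)
  obtain ⟨p, hp, hpd⟩ := Nat.exists_prime_and_dvd hne
  have := Fact.mk hp
  obtain ⟨x, hx⟩ := exists_prime_orderOf_dvd_card' p hpd
  have hsurj := QuotientGroup.mk'_surjective M
  -- By maximality of `M`, an element of order `p` generates the quotient.
  have htop : Subgroup.zpowers x = ⊤ := by
    have hle : M ≤ (Subgroup.zpowers x).comap (QuotientGroup.mk' M) := by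
      intro m hm
      have : QuotientGroup.mk' M m = 1 := by simpa using hm
      rw [Subgroup.mem_comap, this]
      exact one_mem _
    rcases hle.eq_or_lt with h | h
    · exfalso
      have hbot : Subgroup.zpowers x = ⊥ := by
        rw [← Subgroup.map_comap_eq_self_of_surjective hsurj (Subgroup.zpowers x), ← h]
        simp
      rw [Subgroup.zpowers_eq_bot] at hbot
      rw [hbot, orderOf_one] at hx
      exact hp.one_lt.ne hx
    · have := hM.2 _ h
      rw [← Subgroup.map_comap_eq_self_of_surjective hsurj (Subgroup.zpowers x), this,
        Subgroup.map_top_of_surjective _ hsurj]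
  have hcard : M.index = p := by
    rw [Subgroup.index, ← hx, ← Nat.card_zpowers, htop, Subgroup.card_top]
  rwa [hcard]

lemma exists_prime_index_of_eqLocus {G K : Type*} [Group G] [Group K] [Finite G] [Finite K]
    [Group.IsSolvable G] (φ ψ : G →* K) (hne : φ.eqLocus ψ ≠ ⊤) :
    ∃ M : Subgroup G, M.Normal ∧ M.index.Prime ∧ M.index ∣ Nat.card K ∧
      M.index ≤ (φ.eqLocus ψ).index := by
  set E := φ.eqLocus ψ with hE
  let C := E.normalCore
  have hCtop : C ≠ ⊤ := fun h => hne (top_le_iff.mp (h ▸ E.normalCore_le))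
  have : Nontrivial (G ⧸ C) := QuotientGroup.nontrivial_iff.mpr hCtop
  obtain ⟨M, hMn, hMp⟩ := exists_normal_prime_index (G ⧸ C)
  have hidx : (M.comap (QuotientGroup.mk' C)).index = M.index :=
    Subgroup.index_comap_of_surjective M (QuotientGroup.mk'_surjective C)
  have hMC : M.index ∣ C.index := M.index_dvd_card
  refine ⟨M.comap (QuotientGroup.mk' C), inferInstance, hidx ▸ hMp, ?_, ?_⟩
  · rw [hidx]
    have hker : (φ.prod ψ).ker ≤ C := by
      rw [Subgroup.normal_le_normalCore]
      intro g hg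
      have h : φ g = 1 ∧ ψ g = 1 := by simpa [MonoidHom.mem_ker] using hg
      exact h.1.trans h.2.symm
    have h1 : M.index ∣ Nat.card K * Nat.card K := by
      rw [← Nat.card_prod]
      refine (hMC.trans (Subgroup.index_dvd_of_le hker)).trans ?_
      rw [Subgroup.index_ker]
      exact Subgroup.card_subgroup_dvd_card _
    exact (hMp.dvd_mul.mp h1).elim id id
  · rw [hidx]
    have h1 : C.index ∣ E.index.factorial := by
      change E.normalCore.index ∣ _
      rw [Subgroup.normalCore_eq_ker, Subgroup.index_ker, Subgroup.index, ← Nat.card_perm]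
      exact Subgroup.card_subgroup_dvd_card _
    exact (hMp.dvd_factorial).mp (hMC.trans h1)

/-- A normal subgroup of prime index `r ∣ |H|` is the kernel of a homomorphism to `H`. -/
lemma exists_hom_ker_eq {G H : Type*} [Group G] [Group H] [Finite H] (M : Subgroup G)
    [M.Normal] (hp : M.index.Prime) (hd : M.index ∣ Nat.card H) :
    ∃ θ : G →* H, θ.ker = M := by
  have := Fact.mk hp
  obtain ⟨h, hh⟩ := exists_prime_orderOf_dvd_card' M.index hd
  let e : G ⧸ M ≃* Subgroup.zpowers h :=
    mulEquivOfPrimeCardEq (p := M.index) rfl (by rw [Nat.card_zpowers, hh])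
  refine ⟨((Subgroup.zpowers h).subtype.comp e.toMonoidHom).comp (QuotientGroup.mk' M), ?_⟩
  ext g
  simp [MonoidHom.mem_ker]

lemma card_div_card_eq_inv_index {G : Type*} [Group G] [Finite G] (E : Subgroup G) :
    (Nat.card E : ℝ) / (Nat.card G : ℝ) = (E.index : ℝ)⁻¹ := by
  rw [← E.card_mul_index]
  have : (Nat.card E : ℝ) ≠ 0 := by exact_mod_cast Nat.card_pos.ne'
  push_cast
  rw [div_mul_eq_div_div, div_self this, one_div]

lemma agr_le_one {G H : Type*} [Finite G] (f g : G → H) : agr f g ≤ 1 :=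
  div_le_one_of_le₀ (by exact_mod_cast Finite.card_subtype_le _) (by positivity)

lemma agr_le_Lambda {G H : Type*} [Group G] [Group H] [Finite G] {φ ψ : G → H}
    (hφ : IsAffineHom φ) (hψ : IsAffineHom ψ) (hne : φ ≠ ψ) : agr φ ψ ≤ Lambda G H := by
  refine le_csSup ⟨1, ?_⟩ (Or.inr ⟨φ, ψ, hφ, hψ, hne, rfl⟩)
  rintro a (rfl | ⟨f, g, -, -, -, rfl⟩)
  · exact zero_le_one
  · exact agr_le_one f g

lemma Lambda_nonneg {G H : Type*} [Group G] [Group H] : 0 ≤ Lambda G H := by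
  refine Real.sSup_nonneg ?_
  rintro a (rfl | ⟨f, g, -, -, -, rfl⟩)
  · exact le_rfl
  · unfold agr; positivity

/-- The agreement set is a left coset of the equalizer of the linear parts. -/
lemma agr_eq_of_agree {G K : Type*} [Group G] [Group K] [Finite G] {φ ψ : G → K} {a b : K}
    {φ₀ ψ₀ : G →* K} (hφ : ∀ g, φ g = a * φ₀ g) (hψ : ∀ g, ψ g = b * ψ₀ g) {x₀ : G}
    (hx : φ x₀ = ψ x₀) : agr φ ψ = ((φ₀.eqLocus ψ₀).index : ℝ)⁻¹ := by
  rw [← card_div_card_eq_inv_index, agr]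
  congr 2
  refine Nat.card_congr ((Equiv.mulLeft x₀⁻¹).subtypeEquiv fun x => ?_)
  change _ ↔ φ₀ (x₀⁻¹ * x) = ψ₀ (x₀⁻¹ * x)
  have h1 : φ x = φ x₀ * φ₀ (x₀⁻¹ * x) := by simp [hφ, mul_assoc]
  have h2 : ψ x = φ x₀ * ψ₀ (x₀⁻¹ * x) := by rw [hx]; simp [hψ, mul_assoc]
  rw [h1, h2, mul_right_inj]

/-- For `G` finite solvable, `H` finite, and `N ⊴ H`,
`Λ_{G, H/N} ≤ Λ_{G, H}`. -/
theorem statement15 (G H : Type) [Group G] [Group H] [Fintype G] [Fintype H]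
    (hG : IsSolvable G) (N : Subgroup H) [N.Normal] :
    Lambda G (H ⧸ N) ≤ Lambda G H := by
  have : Group.IsSolvable G := hG
  refine csSup_le (Set.insert_nonempty _ _) ?_
  rintro _ (rfl | ⟨φ, ψ, ⟨a, φ₀, hφ⟩, ⟨b, ψ₀, hψ⟩, hne, rfl⟩)
  · exact Lambda_nonneg
  by_cases hex : ∃ x₀, φ x₀ = ψ x₀
  · obtain ⟨x₀, hx⟩ := hex
    rw [agr_eq_of_agree hφ hψ hx]
    have hE : φ₀.eqLocus ψ₀ ≠ ⊤ := by
      intro h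
      have h0 : φ₀ = ψ₀ := MonoidHom.eq_of_eqOn_top fun x _ => by
        have : x ∈ φ₀.eqLocus ψ₀ := h ▸ Subgroup.mem_top x
        exact this
      subst h0
      rw [hφ, hψ, mul_left_inj] at hx
      exact hne (funext fun g => by rw [hφ, hψ, hx])
    obtain ⟨M, hMn, hMp, hMd, hMle⟩ := exists_prime_index_of_eqLocus φ₀ ψ₀ hE
    obtain ⟨θ, hθ⟩ := exists_hom_ker_eq (H := H) M hMp
      (hMd.trans N.card_quotient_dvd_card)
    have hloc : θ.eqLocus 1 = M := by
      rw [← hθ]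
      rfl
    have hagr : agr (θ : G → H) (1 : G →* H) = (M.index : ℝ)⁻¹ := by
      rw [agr_eq_of_agree (φ := θ) (ψ := (1 : G →* H)) (a := 1) (b := 1) (φ₀ := θ) (ψ₀ := 1)
        (x₀ := 1) (by simp) (by simp) (by simp), hloc]
    have hθne : (θ : G → H) ≠ (1 : G →* H) := by
      intro h
      rw [DFunLike.coe_injective h, MonoidHom.ker_one] at hθ
      rw [← hθ, Subgroup.index_top] at hMp
      exact Nat.not_prime_one hMp
    calc ((φ₀.eqLocus ψ₀).index : ℝ)⁻¹ ≤ (M.index : ℝ)⁻¹ :=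
          inv_anti₀ (by exact_mod_cast hMp.pos) (by exact_mod_cast hMle)
      _ = agr (θ : G → H) (1 : G →* H) := hagr.symm
      _ ≤ Lambda G H := agr_le_Lambda ⟨1, θ, by simp⟩ ⟨1, 1, by simp⟩ hθne
  · have : IsEmpty {x : G // φ x = ψ x} := ⟨fun x => hex ⟨x.1, x.2⟩⟩
    rw [agr, Nat.card_of_isEmpty, Nat.cast_zero, zero_div]
    exact Lambda_nonneg
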